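/- Let δ : ]0,∞[ → ℝ be continuous, nonnegative and bounded, and let r : ]α,ω[ → ]0,∞[ be a maximal solution of r̈ + δ(r)ṙ = -1/r² with α > -∞. Then lim_{t→α⁺} r(t)/(t-α)^{2/3} = (9/2)^{1/3}. -/

import Mathlib

open Set Filter

/-- Positive solutions of the damped one-dimensional Kepler equation
`r̈ + δ(r)ṙ = -1/r²` on a set `S` of times. -/
def Kepler1DOn (δ : ℝ → ℝ) (S : Set ℝ) (r r' : ℝ → ℝ) : Prop :=
  (∀ t ∈ S, 0 < r t) ∧
  (∀ t ∈ S, HasDerivWithinAt r (r' t) S t) ∧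
  (∀ t ∈ S, HasDerivWithinAt r' (-(δ (r t)) * r' t - 1 / (r t) ^ 2) S t)

open scoped Topology

/-! In Liénard coordinates `(r, p)`, with `p = ṙ + Δ(r)` and `Δ` the primitive of `δ` vanishing at
`0`, the equation becomes `ṙ = p - Δ(r)`, `ṗ = -1/r²`. Since `p` is decreasing, `ṙ + D r` is bounded
below near `α`, which forces `r` to converge there. A positive limit makes `p` converge as well, and
Picard–Lindelöf then continues the solution to the left of `α`; so `r → 0`. L'Hôpital's rule for
`p²` against `1/r` gives `r p² → 2`, that is `ṙ r^{1/2} → √2`, and L'Hôpital's rule for `r^{3/2}`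
against `t - α` concludes. -/

section OneSidedCalculus

variable {f f' g g' : ℝ → ℝ} {a : ℝ}

theorem exists_antitoneOn_Ioo_of_deriv_nonpos (hf : ∀ᶠ t in 𝓝[>] a, HasDerivAt f (f' t) t)
    (hf' : ∀ᶠ t in 𝓝[>] a, f' t ≤ 0) : ∃ b > a, AntitoneOn f (Ioo a b) := by
  obtain ⟨b, hab, hb⟩ := mem_nhdsGT_iff_exists_Ioo_subset.1 (hf.and hf')
  exact ⟨b, hab, antitoneOn_of_hasDerivWithinAt_nonpos (convex_Ioo a b)
    (fun t ht ↦ (hb ht).1.continuousAt.continuousWithinAt)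
    (fun t ht ↦ (hb (interior_subset ht)).1.hasDerivWithinAt)
    fun t ht ↦ (hb (interior_subset ht)).2⟩

theorem eventually_ge_of_antitoneOn_Ioo {b s : ℝ} (hf : AntitoneOn f (Ioo a b)) (hs : s ∈ Ioo a b) :
    ∀ᶠ t in 𝓝[>] a, f s ≤ f t := by
  filter_upwards [Ioo_mem_nhdsGT hs.1] with t ht
  exact hf ⟨ht.1, ht.2.trans hs.2⟩ hs ht.2.le

theorem exists_eventually_ge_of_deriv_nonpos (hf : ∀ᶠ t in 𝓝[>] a, HasDerivAt f (f' t) t)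
    (hf' : ∀ᶠ t in 𝓝[>] a, f' t ≤ 0) : ∃ c, ∀ᶠ t in 𝓝[>] a, c ≤ f t := by
  obtain ⟨b, hab, hanti⟩ := exists_antitoneOn_Ioo_of_deriv_nonpos hf hf'
  obtain ⟨s, hs⟩ := nonempty_Ioo.2 hab
  exact ⟨f s, eventually_ge_of_antitoneOn_Ioo hanti hs⟩

theorem exists_tendsto_nhdsGT_of_le_deriv {c m : ℝ} (hf : ∀ᶠ t in 𝓝[>] a, HasDerivAt f (f' t) t)
    (hf' : ∀ᶠ t in 𝓝[>] a, c ≤ f' t) (hm : ∀ᶠ t in 𝓝[>] a, m ≤ f t) :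
    ∃ l, Tendsto f (𝓝[>] a) (𝓝 l) := by
  have hid : Tendsto (fun t ↦ c * t) (𝓝[>] a) (𝓝 (c * a)) :=
    (Continuous.tendsto (by fun_prop) a).mono_left nhdsWithin_le_nhds
  obtain ⟨b, hab, hanti⟩ := exists_antitoneOn_Ioo_of_deriv_nonpos (f := fun t ↦ c * t - f t)
    (f' := fun t ↦ c - f' t)
    (hf.mono fun t ht ↦ (((hasDerivAt_id t).const_mul c).sub ht).congr_deriv (by ring))
    (hf'.mono fun t ht ↦ sub_nonpos.2 ht)
  have hle : ∀ᶠ t in 𝓝[>] a, c * t - f t ≤ c * a + 1 - m := by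
    filter_upwards [hm, hid.eventually_le_const (lt_add_one _)] with t h₁ h₂
    linarith
  have hbdd : BddAbove ((fun t ↦ c * t - f t) '' Ioo a b) := by
    refine ⟨c * a + 1 - m, forall_mem_image.2 fun s hs ↦ ?_⟩
    obtain ⟨t, hst, ht⟩ := ((eventually_ge_of_antitoneOn_Ioo hanti hs).and hle).exists
    exact hst.trans ht
  have hlim := hid.sub (hanti.tendsto_nhdsWithin_Ioo_right (nonempty_Ioo.2 hab) hbdd)
  exact ⟨_, hlim.congr fun t ↦ sub_sub_cancel _ _⟩

theorem hasDerivAt_exp_mul_mul {k t : ℝ} (hf : HasDerivAt f (f' t) t) :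
    HasDerivAt (fun t ↦ Real.exp (k * t) * f t) (Real.exp (k * t) * (f' t + k * f t)) t :=
  ((((hasDerivAt_id t).const_mul k).exp).mul hf).congr_deriv (by simp only [id]; ring)

theorem tendsto_exp_mul_nhdsGT (k : ℝ) :
    Tendsto (fun t ↦ Real.exp (k * t)) (𝓝[>] a) (𝓝 (Real.exp (k * a))) :=
  (Continuous.tendsto (by fun_prop) a).mono_left nhdsWithin_le_nhds

theorem exists_tendsto_nhdsGT_of_le_deriv_add_mul {c k : ℝ}
    (hf : ∀ᶠ t in 𝓝[>] a, HasDerivAt f (f' t) t) (hf' : ∀ᶠ t in 𝓝[>] a, c ≤ f' t + k * f t)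
    (hpos : ∀ᶠ t in 𝓝[>] a, 0 ≤ f t) : ∃ l, Tendsto f (𝓝[>] a) (𝓝 l) := by
  obtain ⟨l, hl⟩ : ∃ l, Tendsto (fun t ↦ Real.exp (k * t) * f t) (𝓝[>] a) (𝓝 l) := by
    refine exists_tendsto_nhdsGT_of_le_deriv (c := Real.exp (k * a) * c - 1) (m := 0)
      (hf.mono fun t ht ↦ hasDerivAt_exp_mul_mul ht) ?_
      (hpos.mono fun t ht ↦ mul_nonneg (Real.exp_nonneg _) ht)
    filter_upwards [hf',
      ((tendsto_exp_mul_nhdsGT k).mul_const c).eventually_const_le (sub_one_lt _)] with t hct hexp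
    exact hexp.trans (mul_le_mul_of_nonneg_left hct (Real.exp_nonneg _))
  exact ⟨_, ((tendsto_exp_mul_nhdsGT (-k)).mul hl).congr fun t ↦ by
    rw [← mul_assoc, ← Real.exp_add]; simp⟩

theorem eventually_nonpos_of_deriv_le_mul {k : ℝ} (hf : ∀ᶠ t in 𝓝[>] a, HasDerivAt f (f' t) t)
    (hf' : ∀ᶠ t in 𝓝[>] a, f' t ≤ k * f t) (h₀ : Tendsto f (𝓝[>] a) (𝓝 0)) :
    ∀ᶠ t in 𝓝[>] a, f t ≤ 0 := by
  obtain ⟨b, hab, hanti⟩ := exists_antitoneOn_Ioo_of_deriv_nonpos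
    (hf.mono fun t ht ↦ hasDerivAt_exp_mul_mul (k := -k) ht) (hf'.mono fun t ht ↦
      mul_nonpos_of_nonneg_of_nonpos (Real.exp_nonneg _) (by linarith))
  have hlim : Tendsto (fun t ↦ Real.exp (-k * t) * f t) (𝓝[>] a) (𝓝 0) := by
    simpa only [mul_zero] using (tendsto_exp_mul_nhdsGT (-k)).mul h₀
  filter_upwards [Ioo_mem_nhdsGT hab] with s hs
  exact nonpos_of_mul_nonpos_right
    (ge_of_tendsto hlim (eventually_ge_of_antitoneOn_Ioo hanti hs)) (Real.exp_pos _)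

theorem eventually_div_lt_of_deriv_div_lt {m M : ℝ} (hmM : m < M)
    (hf : ∀ᶠ t in 𝓝[>] a, HasDerivAt f (f' t) t) (hg : ∀ᶠ t in 𝓝[>] a, HasDerivAt g (g' t) t)
    (hg' : ∀ᶠ t in 𝓝[>] a, g' t < 0) (htop : Tendsto g (𝓝[>] a) atTop)
    (hm : ∀ᶠ t in 𝓝[>] a, f' t / g' t < m) : ∀ᶠ t in 𝓝[>] a, f t / g t < M := by
  obtain ⟨c, hc⟩ := exists_eventually_ge_of_deriv_nonpos (f := fun t ↦ m * g t - f t)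
    (f' := fun t ↦ m * g' t - f' t)
    (by filter_upwards [hf, hg] with t h₁ h₂ using (h₂.const_mul m).sub h₁)
    (by filter_upwards [hg', hm] with t h₁ h₂ using sub_nonpos.2 ((div_lt_iff_of_neg h₁).1 h₂).le)
  have hbig : Tendsto (fun t ↦ (M - m) * g t) (𝓝[>] a) atTop :=
    htop.const_mul_atTop (sub_pos.2 hmM)
  filter_upwards [hc, htop.eventually_gt_atTop 0, hbig.eventually_gt_atTop (-c)] with t h₁ h₂ h₃
  rw [div_lt_iff₀ h₂]
  linarith

theorem tendsto_div_of_tendsto_deriv_div_of_tendsto_atTop {l : ℝ}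
    (hf : ∀ᶠ t in 𝓝[>] a, HasDerivAt f (f' t) t) (hg : ∀ᶠ t in 𝓝[>] a, HasDerivAt g (g' t) t)
    (hg' : ∀ᶠ t in 𝓝[>] a, g' t < 0) (htop : Tendsto g (𝓝[>] a) atTop)
    (hl : Tendsto (fun t ↦ f' t / g' t) (𝓝[>] a) (𝓝 l)) :
    Tendsto (fun t ↦ f t / g t) (𝓝[>] a) (𝓝 l) := by
  refine tendsto_order.2 ⟨fun m hm ↦ ?_, fun M hM ↦ ?_⟩
  · obtain ⟨k, hmk, hkl⟩ := exists_between hm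
    have hneg := eventually_div_lt_of_deriv_div_lt (neg_lt_neg hmk) (hf.mono fun t ht ↦ ht.neg)
      hg hg' htop ((hl.eventually_const_lt hkl).mono fun t ht ↦ by
        rw [neg_div]; exact neg_lt_neg ht)
    exact hneg.mono fun t ht ↦ neg_lt_neg_iff.1 (neg_div (g t) (f t) ▸ ht)
  · obtain ⟨k, hlk, hkM⟩ := exists_between hM
    exact eventually_div_lt_of_deriv_div_lt hkM hf hg hg' htop (hl.eventually_lt_const hlk)

theorem tendsto_div_rpow_of_tendsto_deriv_mul_rpow {q c : ℝ} (hq : 0 < q)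
    (hpos : ∀ᶠ t in 𝓝[>] a, 0 < f t) (hf : ∀ᶠ t in 𝓝[>] a, HasDerivAt f (f' t) t)
    (h₀ : Tendsto f (𝓝[>] a) (𝓝 0)) (hc : Tendsto (fun t ↦ f' t * f t ^ (q - 1)) (𝓝[>] a) (𝓝 c)) :
    Tendsto (fun t ↦ f t / (t - a) ^ q⁻¹) (𝓝[>] a) (𝓝 ((q * c) ^ q⁻¹)) := by
  have hpow : Tendsto (fun t ↦ f t ^ q / (t - a)) (𝓝[>] a) (𝓝 (q * c)) := by
    refine HasDerivAt.lhopital_zero_nhdsGT (f' := fun t ↦ f' t * q * f t ^ (q - 1))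
      (g' := fun _ ↦ 1) ?_ (.of_forall fun t ↦ (hasDerivAt_id t).sub_const a)
      (.of_forall fun _ ↦ one_ne_zero) ?_ ?_ ?_
    · filter_upwards [hpos, hf] with t ht hft using hft.rpow_const (.inl ht.ne')
    · simpa only [Real.zero_rpow hq.ne'] using h₀.rpow_const (.inr hq.le)
    · exact tendsto_sub_nhds_zero_iff.2 nhdsWithin_le_nhds
    · exact (hc.const_mul q).congr fun t ↦ by ring
  refine (hpow.rpow_const (.inr (inv_nonneg.2 hq.le))).congr' ?_
  filter_upwards [hpos, self_mem_nhdsWithin] with t ht hat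
  rw [Real.div_rpow (by positivity) (sub_nonneg.2 (le_of_lt hat)), Real.rpow_rpow_inv ht.le hq.ne']

end OneSidedCalculus

section Extension

variable {E : Type*} [NormedAddCommGroup E] [NormedSpace ℝ E] {a b : ℝ}

theorem hasDerivAt_ite_le_of_tendsto_deriv {f g g' : ℝ → E} {e : E} (hf : HasDerivAt f e a)
    (hg : ∀ᶠ t in 𝓝[>] a, HasDerivAt g (g' t) t) (hlim : Tendsto g (𝓝[>] a) (𝓝 (f a)))
    (hlim' : Tendsto g' (𝓝[>] a) (𝓝 e)) :
    HasDerivAt (fun t ↦ if t ≤ a then f t else g t) e a := by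
  set y : ℝ → E := fun t ↦ if t ≤ a then f t else g t
  have hleft : HasDerivWithinAt y e (Iic a) a :=
    hf.hasDerivWithinAt.congr (fun t ht ↦ if_pos ht) (if_pos le_rfl)
  have hy_deriv : ∀ᶠ t in 𝓝[>] a, HasDerivAt y (g' t) t := by
    filter_upwards [hg, self_mem_nhdsWithin] with t ht hat
    refine ht.congr_of_eventuallyEq ?_
    filter_upwards [Ioi_mem_nhds hat] with s hs using if_neg (not_le.2 hs)
  have hy_cont : ContinuousWithinAt y (Ioi a) a := by
    have hya : y a = f a := if_pos le_rfl
    rw [ContinuousWithinAt, hya]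
    refine hlim.congr' ?_
    filter_upwards [self_mem_nhdsWithin] with t ht using (if_neg (not_le.2 ht)).symm
  have hright : HasDerivWithinAt y e (Ici a) a :=
    hasDerivWithinAt_Ici_of_tendsto_deriv
      (s := {t | HasDerivAt y (g' t) t} ∩ Ioi a)
      (fun t ht ↦ ht.1.differentiableAt.differentiableWithinAt)
      (hy_cont.mono inter_subset_right) (inter_mem hy_deriv self_mem_nhdsWithin)
      (hlim'.congr' (hy_deriv.mono fun t ht ↦ ht.deriv.symm))
  simpa only [Iic_union_Ici, hasDerivWithinAt_univ] using hleft.union hright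

theorem exists_extension_left_of_tendsto [CompleteSpace E] {v : E → E} {x : ℝ → E} {x₀ : E}
    {U : Set E} (hv : ContDiffAt ℝ 1 v x₀) (hU : U ∈ 𝓝 x₀) (hab : a < b)
    (hx : ∀ t ∈ Ioo a b, HasDerivAt x (v (x t)) t) (hlim : Tendsto x (𝓝[>] a) (𝓝 x₀)) :
    ∃ a' < a, ∃ y : ℝ → E, (∀ t ∈ Ioc a' a, y t ∈ U) ∧
      (∀ t ∈ Ioo a' b, HasDerivAt y (v (y t)) t) ∧ EqOn y x (Ioo a b) := by
  obtain ⟨z, hz₀, ε, hε, hz⟩ :=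
    hv.exists_forall_mem_closedBall_exists_eq_forall_mem_Ioo_hasDerivAt₀ a
  have hz_mem : ∀ᶠ t in 𝓝 a, z t ∈ U ∧ HasDerivAt z (v (z t)) t := by
    have hI : Ioo (a - ε) (a + ε) ∈ 𝓝 a := Ioo_mem_nhds (by linarith) (by linarith)
    exact ((hz a (mem_of_mem_nhds hI)).continuousAt.eventually_mem (hz₀ ▸ hU)).and
      (eventually_of_mem hI hz)
  obtain ⟨a', ha', hz'⟩ := exists_Ioc_subset_of_mem_nhds hz_mem (exists_lt a)
  set y : ℝ → E := fun t ↦ if t ≤ a then z t else x t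
  have hy_left {t : ℝ} (ht : t ≤ a) : y t = z t := if_pos ht
  have hy_right {t : ℝ} (ht : a < t) : y t = x t := if_neg (not_le.2 ht)
  refine ⟨a', ha', y, fun t ht ↦ hy_left ht.2 ▸ (hz' ht).1, fun t ht ↦ ?_,
    fun t ht ↦ hy_right ht.1⟩
  rcases lt_trichotomy t a with hta | rfl | hat
  · rw [hy_left hta.le]
    refine (hz' ⟨ht.1, hta.le⟩).2.congr_of_eventuallyEq ?_
    filter_upwards [Iio_mem_nhds hta] with s hs using hy_left (le_of_lt hs)
  · rw [hy_left le_rfl]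
    refine hasDerivAt_ite_le_of_tendsto_deriv (hz' ⟨ht.1, le_rfl⟩).2
      (eventually_of_mem (Ioo_mem_nhdsGT ht.2) hx) (hz₀ ▸ hlim) ?_
    exact hz₀ ▸ hv.continuousAt.tendsto.comp hlim
  · rw [hy_right hat]
    refine (hx t ⟨hat, ht.2⟩).congr_of_eventuallyEq ?_
    filter_upwards [Ioi_mem_nhds hat] with s hs using hy_right hs

end Extension

section Primitive

variable {δ : ℝ → ℝ} {D : ℝ}

theorem hasDerivAt_integral_of_continuousOn_Ioi (hδc : ContinuousOn δ (Ioi 0))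
    (hδ : ∀ s > 0, |δ s| ≤ D) {s : ℝ} (hs : 0 < s) :
    HasDerivAt (fun u ↦ ∫ x in (0 : ℝ)..u, δ x) (δ s) s := by
  have hint : IntervalIntegrable δ MeasureTheory.volume 0 s := by
    rw [intervalIntegrable_iff_integrableOn_Ioc_of_le hs.le]
    exact .of_bound measure_Ioc_lt_top
      ((hδc.mono Ioc_subset_Ioi_self).aestronglyMeasurable measurableSet_Ioc) D
      (MeasureTheory.ae_restrict_of_forall_mem measurableSet_Ioc fun x hx ↦ hδ x hx.1)
  exact intervalIntegral.integral_hasDerivAt_right hint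
    (hδc.stronglyMeasurableAtFilter isOpen_Ioi s hs) (hδc.continuousAt (Ioi_mem_nhds hs))

theorem abs_integral_le_mul_of_abs_le (hδ : ∀ s > 0, |δ s| ≤ D) {s : ℝ} (hs : 0 < s) :
    |∫ x in (0 : ℝ)..s, δ x| ≤ D * s := by
  have h := intervalIntegral.norm_integral_le_of_norm_le_const (a := 0) (b := s) (f := δ)
    fun x hx ↦ hδ x (uIoc_of_le hs.le ▸ hx).1
  rwa [sub_zero, abs_of_pos hs] at h

end Primitive

/-- The vector field of the damped Kepler equation in Liénard coordinates `(r, p)`, where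
`p = ṙ + Δ(r)` and `Δ` is a primitive of the damping coefficient. -/
noncomputable def lienardField (Δ : ℝ → ℝ) (x : ℝ × ℝ) : ℝ × ℝ :=
  (x.2 - Δ x.1, -(1 / x.1 ^ 2))

/-- The Liénard system `ṙ = p - Δ(r)`, `ṗ = -1/r²` holds at time `t`, with `r(t) > 0`. It is stated
at one instant so that it can be assumed on a set of times as well as eventually along a filter. -/
structure SolvesLienardAt (Δ r p : ℝ → ℝ) (t : ℝ) : Prop where
  pos : 0 < r t
  hasDerivAt_fst : HasDerivAt r (p t - Δ (r t)) t
  hasDerivAt_snd : HasDerivAt p (-(1 / r t ^ 2)) t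

section Correspondence

variable {δ Δ r r' : ℝ → ℝ}

theorem kepler1DOn_iff_solvesLienardAt {S : Set ℝ} (hS : IsOpen S)
    (hΔ : ∀ s > 0, HasDerivAt Δ (δ s) s) :
    Kepler1DOn δ S r r' ↔ ∀ t ∈ S, SolvesLienardAt Δ r (fun t ↦ r' t + Δ (r t)) t := by
  constructor
  · rintro ⟨hpos, hr, hr'⟩ t ht
    have hrt := (hr t ht).hasDerivAt (hS.mem_nhds ht)
    have hrt' := (hr' t ht).hasDerivAt (hS.mem_nhds ht)
    exact ⟨hpos t ht, hrt.congr_deriv (by ring),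
      (hrt'.add ((hΔ _ (hpos t ht)).comp t hrt)).congr_deriv (by ring)⟩
  · refine fun h ↦ ⟨fun t ht ↦ (h t ht).pos, fun t ht ↦ ?_, fun t ht ↦ ?_⟩ <;>
      obtain ⟨hpos, hr, hp⟩ := h t ht
    · exact (hr.congr_deriv (by ring)).hasDerivWithinAt
    · have hr' := hp.sub ((hΔ _ hpos).comp t hr)
      exact ((hr'.congr_of_eventuallyEq (.of_forall fun s ↦ by simp)).congr_deriv
        (by ring)).hasDerivWithinAt

theorem contDiffAt_lienardField (hδc : ContinuousOn δ (Ioi 0))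
    (hΔ : ∀ s > 0, HasDerivAt Δ (δ s) s) {x : ℝ × ℝ} (hx : 0 < x.1) :
    ContDiffAt ℝ 1 (lienardField Δ) x := by
  have hΔ_contDiff : ContDiffAt ℝ 1 Δ x.1 := by
    have hΔ_on : ContDiffOn ℝ 1 Δ (Ioi 0) := by
      rw [contDiffOn_one_iff_derivWithin isOpen_Ioi.uniqueDiffOn]
      exact ⟨fun s hs ↦ (hΔ s hs).differentiableAt.differentiableWithinAt,
        hδc.congr fun s hs ↦ (hΔ s hs).hasDerivWithinAt.derivWithin
          (isOpen_Ioi.uniqueDiffWithinAt hs)⟩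
    exact hΔ_on.contDiffAt (Ioi_mem_nhds hx)
  have hinv : ContDiffAt ℝ 1 (fun y : ℝ × ℝ ↦ 1 / y.1 ^ 2) x :=
    contDiffAt_const.div (contDiffAt_fst.pow 2) (pow_ne_zero 2 hx.ne')
  exact (contDiffAt_snd.sub (hΔ_contDiff.comp x contDiffAt_fst)).prodMk hinv.neg

theorem Kepler1DOn.exists_extension_left (hδc : ContinuousOn δ (Ioi 0))
    (hΔ : ∀ s > 0, HasDerivAt Δ (δ s) s) {α ω r₀ p₀ : ℝ} (hαω : α < ω)
    (hsol : Kepler1DOn δ (Ioo α ω) r r') (hr₀ : 0 < r₀) (hr : Tendsto r (𝓝[>] α) (𝓝 r₀))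
    (hp : Tendsto (fun t ↦ r' t + Δ (r t)) (𝓝[>] α) (𝓝 p₀)) :
    ∃ a < α, ∃ q q' : ℝ → ℝ, Kepler1DOn δ (Ioo a ω) q q' ∧ EqOn q r (Ioo α ω) := by
  have hlienard := (kepler1DOn_iff_solvesLienardAt isOpen_Ioo hΔ).1 hsol
  obtain ⟨a, haα, y, hy_pos, hy, hyr⟩ := exists_extension_left_of_tendsto
    (contDiffAt_lienardField hδc hΔ (x := (r₀, p₀)) hr₀)
    (continuousAt_fst.eventually_mem (Ioi_mem_nhds hr₀)) hαω
    (fun t ht ↦ (hlienard t ht).hasDerivAt_fst.prodMk (hlienard t ht).hasDerivAt_snd)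
    (hr.prodMk_nhds hp)
  refine ⟨a, haα, fun t ↦ (y t).1, fun t ↦ (y t).2 - Δ (y t).1, ?_,
    fun t ht ↦ congrArg Prod.fst (hyr ht)⟩
  refine (kepler1DOn_iff_solvesLienardAt isOpen_Ioo hΔ).2 fun t ht ↦ ⟨?_, ?_, ?_⟩
  · rcases le_or_gt t α with htα | hαt
    · exact hy_pos t ⟨ht.1, htα⟩
    · exact (hyr ⟨hαt, ht.2⟩) ▸ (hlienard t ⟨hαt, ht.2⟩).pos
  · simpa only [sub_add_cancel] using! (hy t ht).fst
  · simpa only [sub_add_cancel] using! (hy t ht).snd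

end Correspondence

section Asymptotics

variable {Δ r p : ℝ → ℝ} {D α : ℝ}

theorem exists_antitoneOn_momentum (h : ∀ᶠ t in 𝓝[>] α, SolvesLienardAt Δ r p t) :
    ∃ b > α, AntitoneOn p (Ioo α b) :=
  exists_antitoneOn_Ioo_of_deriv_nonpos (h.mono fun _ ht ↦ ht.hasDerivAt_snd)
    (.of_forall fun t ↦ neg_nonpos.2 (by positivity))

theorem exists_eventually_ge_momentum (h : ∀ᶠ t in 𝓝[>] α, SolvesLienardAt Δ r p t) :
    ∃ c, ∀ᶠ t in 𝓝[>] α, c ≤ p t :=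
  exists_eventually_ge_of_deriv_nonpos (h.mono fun _ ht ↦ ht.hasDerivAt_snd)
    (.of_forall fun t ↦ neg_nonpos.2 (by positivity))

theorem exists_tendsto_radius (hΔ : ∀ s > 0, Δ s ≤ D * s)
    (h : ∀ᶠ t in 𝓝[>] α, SolvesLienardAt Δ r p t) :
    ∃ r₀ ≥ 0, Tendsto r (𝓝[>] α) (𝓝 r₀) := by
  obtain ⟨c, hc⟩ := exists_eventually_ge_momentum h
  have hle : ∀ᶠ t in 𝓝[>] α, c ≤ p t - Δ (r t) + D * r t := by
    filter_upwards [h, hc] with t ht hct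
    linarith [hΔ _ ht.pos]
  have hpos : ∀ᶠ t in 𝓝[>] α, 0 ≤ r t := h.mono fun _ ht ↦ ht.pos.le
  obtain ⟨r₀, hr⟩ := exists_tendsto_nhdsGT_of_le_deriv_add_mul
    (h.mono fun _ ht ↦ ht.hasDerivAt_fst) hle hpos
  exact ⟨r₀, ge_of_tendsto hr hpos, hr⟩

theorem exists_tendsto_momentum {r₀ : ℝ} (h : ∀ᶠ t in 𝓝[>] α, SolvesLienardAt Δ r p t)
    (hr₀ : 0 < r₀) (hr : Tendsto r (𝓝[>] α) (𝓝 r₀)) : ∃ p₀, Tendsto p (𝓝[>] α) (𝓝 p₀) := by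
  obtain ⟨c, hc⟩ := exists_eventually_ge_momentum h
  have hlim : Tendsto (fun t ↦ -(1 / r t ^ 2)) (𝓝[>] α) (𝓝 (-(1 / r₀ ^ 2))) :=
    (tendsto_const_nhds.div (hr.pow 2) (pow_ne_zero 2 hr₀.ne')).neg
  exact exists_tendsto_nhdsGT_of_le_deriv (h.mono fun _ ht ↦ ht.hasDerivAt_snd)
    (hlim.eventually_const_le (sub_one_lt _)) hc

theorem exists_pos_eventually_le_momentum (hΔ : ∀ s > 0, |Δ s| ≤ D * s)
    (h : ∀ᶠ t in 𝓝[>] α, SolvesLienardAt Δ r p t) (hr : Tendsto r (𝓝[>] α) (𝓝 0)) :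
    ∃ c > 0, ∀ᶠ t in 𝓝[>] α, c ≤ p t := by
  obtain ⟨b, hαb, hanti⟩ := exists_antitoneOn_momentum h
  by_contra hneg
  have hp_nonpos : ∀ᶠ t in 𝓝[>] α, p t ≤ 0 := by
    filter_upwards [Ioo_mem_nhdsGT hαb] with t ht
    by_contra! hpt
    exact hneg ⟨p t, hpt, eventually_ge_of_antitoneOn_Ioo hanti ht⟩
  have hvel_le : ∀ᶠ t in 𝓝[>] α, p t - Δ (r t) ≤ D * r t := by
    filter_upwards [h, hp_nonpos] with t ht hpt
    linarith [neg_le_of_abs_le (hΔ _ ht.pos)]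
  obtain ⟨t, ht, hrt⟩ := (h.and (eventually_nonpos_of_deriv_le_mul
    (h.mono fun _ ht ↦ ht.hasDerivAt_fst) hvel_le hr)).exists
  exact ht.pos.not_ge hrt

theorem tendsto_primitive_comp_radius (hΔ : ∀ s > 0, |Δ s| ≤ D * s)
    (h : ∀ᶠ t in 𝓝[>] α, SolvesLienardAt Δ r p t) (hr : Tendsto r (𝓝[>] α) (𝓝 0)) :
    Tendsto (fun t ↦ Δ (r t)) (𝓝[>] α) (𝓝 0) :=
  squeeze_zero_norm' (h.mono fun _ ht ↦ hΔ _ ht.pos) (by simpa only [mul_zero] using hr.const_mul D)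

theorem tendsto_radius_mul_momentum_sq (hΔ : ∀ s > 0, |Δ s| ≤ D * s)
    (h : ∀ᶠ t in 𝓝[>] α, SolvesLienardAt Δ r p t) (hr : Tendsto r (𝓝[>] α) (𝓝 0)) :
    Tendsto (fun t ↦ r t * p t ^ 2) (𝓝[>] α) (𝓝 2) := by
  obtain ⟨c, hc, hcp⟩ := exists_pos_eventually_le_momentum hΔ h hr
  have hΔ₀ := tendsto_primitive_comp_radius hΔ h hr
  have hvel : ∀ᶠ t in 𝓝[>] α, 0 < p t - Δ (r t) := by
    filter_upwards [hcp, hΔ₀.eventually_lt_const hc] with t h₁ h₂ using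
      sub_pos.2 (h₂.trans_le h₁)
  have hinv : Tendsto (fun t ↦ (r t)⁻¹) (𝓝[>] α) atTop :=
    (tendsto_nhdsWithin_iff.2 ⟨hr, h.mono fun _ ht ↦ ht.pos⟩).inv_tendsto_nhdsGT_zero
  have hratio : Tendsto (fun t ↦ Δ (r t) / p t) (𝓝[>] α) (𝓝 0) := by
    refine squeeze_zero_norm' ?_ (by simpa only [abs_zero, zero_div] using hΔ₀.abs.div_const c)
    filter_upwards [hcp] with t ht
    rw [Real.norm_eq_abs, abs_div, abs_of_pos (hc.trans_le ht)]
    gcongr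
  have hderiv : Tendsto (fun t ↦ (2 * p t * -(1 / r t ^ 2)) / (-(p t - Δ (r t)) / r t ^ 2))
      (𝓝[>] α) (𝓝 2) := by
    have hlim : Tendsto (fun t ↦ 2 / (1 - Δ (r t) / p t)) (𝓝[>] α) (𝓝 (2 / (1 - 0))) :=
      tendsto_const_nhds.div (hratio.const_sub 1) (by norm_num)
    rw [sub_zero, div_one] at hlim
    refine hlim.congr' ?_
    filter_upwards [h, hcp, hvel] with t ht hpt hvt
    have hr_ne := ht.pos.ne'
    have hp_ne := (hc.trans_le hpt).ne'
    field_simp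
  refine (tendsto_div_of_tendsto_deriv_div_of_tendsto_atTop
    (h.mono fun t ht ↦ (ht.hasDerivAt_snd.pow 2).congr_deriv (by ring))
    (h.mono fun t ht ↦ ht.hasDerivAt_fst.inv ht.pos.ne') ?_ hinv hderiv).congr fun t ↦ ?_
  · filter_upwards [h, hvel] with t ht hvt
    exact div_neg_of_neg_of_pos (neg_neg_of_pos hvt) (pow_pos ht.pos 2)
  · rw [Pi.pow_apply, Pi.inv_apply, div_inv_eq_mul, mul_comm]

theorem tendsto_velocity_mul_sqrt_radius (hΔ : ∀ s > 0, |Δ s| ≤ D * s)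
    (h : ∀ᶠ t in 𝓝[>] α, SolvesLienardAt Δ r p t) (hr : Tendsto r (𝓝[>] α) (𝓝 0)) :
    Tendsto (fun t ↦ (p t - Δ (r t)) * √(r t)) (𝓝[>] α) (𝓝 √2) := by
  obtain ⟨c, hc, hcp⟩ := exists_pos_eventually_le_momentum hΔ h hr
  have hmain := (tendsto_radius_mul_momentum_sq hΔ h hr).sqrt
  have herr := (tendsto_primitive_comp_radius hΔ h hr).mul hr.sqrt
  rw [zero_mul] at herr
  rw [← sub_zero √2]
  refine (hmain.sub herr).congr' ?_
  filter_upwards [h, hcp] with t ht hpt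
  rw [Real.sqrt_mul ht.pos.le, Real.sqrt_sq (hc.trans_le hpt).le]
  ring

theorem tendsto_radius_div_rpow (hΔ : ∀ s > 0, |Δ s| ≤ D * s)
    (h : ∀ᶠ t in 𝓝[>] α, SolvesLienardAt Δ r p t) (hr : Tendsto r (𝓝[>] α) (𝓝 0)) :
    Tendsto (fun t ↦ r t / (t - α) ^ ((2 : ℝ) / 3)) (𝓝[>] α)
      (𝓝 ((9 / 2 : ℝ) ^ ((1 : ℝ) / 3))) := by
  have hvel : Tendsto (fun t ↦ (p t - Δ (r t)) * r t ^ ((3 / 2 : ℝ) - 1)) (𝓝[>] α) (𝓝 √2) := by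
    convert tendsto_velocity_mul_sqrt_radius hΔ h hr using 3 with t
    rw [Real.sqrt_eq_rpow]
    norm_num
  have hval : (3 / 2 * √2) ^ ((2 : ℝ) / 3) = (9 / 2 : ℝ) ^ ((1 : ℝ) / 3) := by
    have hsq : (9 / 2 : ℝ) = (3 / 2 * √2) ^ (2 : ℝ) := by
      rw [Real.rpow_two, mul_pow, Real.sq_sqrt zero_le_two]
      norm_num
    rw [hsq, ← Real.rpow_mul (by positivity)]
    norm_num
  simpa only [inv_div, hval] using tendsto_div_rpow_of_tendsto_deriv_mul_rpow (by norm_num)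
    (h.mono fun _ ht ↦ ht.pos) (h.mono fun _ ht ↦ ht.hasDerivAt_fst) hr hvel

end Asymptotics

theorem stmt14_general {δ : ℝ → ℝ} (hδc : ContinuousOn δ (Ioi 0)) {D : ℝ}
    (hδ : ∀ s > 0, |δ s| ≤ D) {α ω : ℝ} (hαω : α < ω) {r r' : ℝ → ℝ}
    (hsol : Kepler1DOn δ (Ioo α ω) r r')
    (hmax : ¬∃ a < α, ∃ q q' : ℝ → ℝ, Kepler1DOn δ (Ioo a ω) q q' ∧ EqOn q r (Ioo α ω)) :
    Tendsto (fun t ↦ r t / (t - α) ^ ((2 : ℝ) / 3)) (𝓝[>] α)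
      (𝓝 ((9 / 2 : ℝ) ^ ((1 : ℝ) / 3))) := by
  set Δ : ℝ → ℝ := fun s ↦ ∫ x in (0 : ℝ)..s, δ x
  have hΔ : ∀ s > 0, HasDerivAt Δ (δ s) s :=
    fun s ↦ hasDerivAt_integral_of_continuousOn_Ioi hδc hδ
  have hΔ_le : ∀ s > 0, |Δ s| ≤ D * s := fun s ↦ abs_integral_le_mul_of_abs_le hδ
  have hlienard : ∀ᶠ t in 𝓝[>] α, SolvesLienardAt Δ r (fun t ↦ r' t + Δ (r t)) t :=
    eventually_of_mem (Ioo_mem_nhdsGT hαω) ((kepler1DOn_iff_solvesLienardAt isOpen_Ioo hΔ).1 hsol)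
  obtain ⟨r₀, hr₀, hr⟩ :=
    exists_tendsto_radius (fun s hs ↦ (le_abs_self _).trans (hΔ_le s hs)) hlienard
  obtain rfl | hr₀_pos := hr₀.eq_or_lt
  · exact tendsto_radius_div_rpow hΔ_le hlienard hr
  · obtain ⟨p₀, hp⟩ := exists_tendsto_momentum hlienard hr₀_pos hr
    exact absurd (hsol.exists_extension_left hδc hΔ hαω hr₀_pos hr hp) hmax

/-- Collision asymptotics: for a maximal solution of the 1D damped Kepler equation
on `]α,ω[` with `α > -∞`, one has `r(t)/(t-α)^{2/3} → (9/2)^{1/3}` as `t → α⁺`. -/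
theorem stmt14 (δ : ℝ → ℝ) (hδc : ContinuousOn δ (Ioi 0))
    (hδ0 : ∀ s > (0 : ℝ), 0 ≤ δ s) (Dstar : ℝ) (hδb : ∀ s > (0 : ℝ), δ s ≤ Dstar)
    (α ω : ℝ) (hαω : α < ω)
    (r r' : ℝ → ℝ) (hsol : Kepler1DOn δ (Ioo α ω) r r')
    (hmax : ¬∃ (a' b' : ℝ) (q q' : ℝ → ℝ), a' ≤ α ∧ ω ≤ b' ∧ (a' < α ∨ ω < b') ∧
      Kepler1DOn δ (Ioo a' b') q q' ∧ ∀ t ∈ Ioo α ω, q t = r t) :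
    Tendsto (fun t => r t / (t - α) ^ ((2 : ℝ) / 3)) (nhdsWithin α (Ioi α))
      (nhds ((9 / 2 : ℝ) ^ ((1 : ℝ) / 3))) :=
  stmt14_general hδc (fun s hs ↦ (abs_of_nonneg (hδ0 s hs)).trans_le (hδb s hs)) hαω hsol
    fun ⟨a, ha, q, q', hq, hqr⟩ ↦ hmax ⟨a, ω, q, q', ha.le, le_rfl, .inl ha, hq, hqr⟩
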